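/- (Strict counter-transitivity) Let D be an n×n attack matrix with entries in {0,1} and let v* be the unique fixed point of its categoriser map. For an argument x, let Att(x) = { j : D x j = 1 } be its set of direct attackers. If for arguments x and y there exists an injective map δ : Att(x) → Att(y) such that v*_{δ(j)} ≥ v*_j for every j ∈ Att(x), and moreover either |Att(x)| < |Att(y)| or v*_{δ(j)} > v*_j for some j ∈ Att(x), then v*_x > v*_y. -/

import Mathlib

/-!
A fixed point of the categoriser map is positive in every coordinate, and `v z` is a strictly
decreasing function of the total strength of the attackers of `z`. The injection `δ` gives
`∑ att x v ≤ ∑ att x (v ∘ δ) = ∑ δ(att x) v ≤ ∑ att y v`. A strict gain on one attacker makes the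
first inequality strict; if there are fewer attackers of `x` than of `y`, then `δ` misses an
attacker of `y`, whose strength is positive, and the second inequality is strict.
-/

/-- The categoriser map of an attack matrix `D`. -/
noncomputable def catF {n : ℕ} (D : Fin n → Fin n → ℝ) (v : Fin n → ℝ) : Fin n → ℝ :=
  fun i => 1 / (1 + ∑ j, D i j * v j)

/-- The set of direct attackers of argument `x`. -/
def att {n : ℕ} (D : Fin n → Fin n → ℝ) (x : Fin n) : Set (Fin n) := {j | D x j = 1}

theorem stmt_19 (n : ℕ) (D : Fin n → Fin n → ℝ)
    (hD : ∀ i j, D i j = 0 ∨ D i j = 1)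
    (vstar : Fin n → ℝ) (hvstar : vstar ∈ Set.Icc (0 : Fin n → ℝ) 1)
    (hfix : catF D vstar = vstar)
    (x y : Fin n) (δ : Fin n → Fin n)
    (hinj : Set.InjOn δ (att D x))
    (hmap : Set.MapsTo δ (att D x) (att D y))
    (hle : ∀ j ∈ att D x, vstar j ≤ vstar (δ j))
    (hstrict : (att D x).ncard < (att D y).ncard ∨ ∃ j ∈ att D x, vstar j < vstar (δ j)) :
    vstar y < vstar x := by
  classical
  have h0 : ∀ j, 0 ≤ vstar j := fun j => hvstar.1 j
  have hval : ∀ z, vstar z = 1 / (1 + ∑ j, D z j * vstar j) := fun z => (congrFun hfix z).symm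
  have hsum : ∀ z, ∑ j, D z j * vstar j = ∑ j ∈ (att D z).toFinset, vstar j := by
    intro z
    have hA : (att D z).toFinset = Finset.univ.filter (fun j => D z j = 1) := by
      ext j
      rw [Set.mem_toFinset, Finset.mem_filter]
      simp [att]
    rw [hA, Finset.sum_filter]
    refine Finset.sum_congr rfl fun j _ => ?_
    rcases hD z j with h | h <;> simp [h]
  have hnonneg : ∀ z, 0 ≤ ∑ j ∈ (att D z).toFinset, vstar j :=
    fun z => Finset.sum_nonneg fun j _ => h0 j
  have hpos : ∀ z, 0 < vstar z := by
    intro z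
    rw [hval z, hsum z]
    have := hnonneg z
    positivity
  have himg : ∑ j ∈ (att D x).toFinset.image δ, vstar j
      = ∑ j ∈ (att D x).toFinset, vstar (δ j) :=
    Finset.sum_image (by simpa using hinj)
  have hsub : (att D x).toFinset.image δ ⊆ (att D y).toFinset := by
    intro k hk
    obtain ⟨j, hj, rfl⟩ := Finset.mem_image.1 hk
    exact Set.mem_toFinset.2 (hmap (Set.mem_toFinset.1 hj))
  have hle₁ : ∑ j ∈ (att D x).toFinset, vstar j ≤ ∑ j ∈ (att D x).toFinset, vstar (δ j) :=
    Finset.sum_le_sum fun j hj => hle j (Set.mem_toFinset.1 hj)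
  have hle₂ : ∑ j ∈ (att D x).toFinset.image δ, vstar j ≤ ∑ j ∈ (att D y).toFinset, vstar j :=
    Finset.sum_le_sum_of_subset_of_nonneg hsub fun j _ _ => h0 j
  have hlt : ∑ j ∈ (att D x).toFinset, vstar j < ∑ j ∈ (att D y).toFinset, vstar j := by
    rcases hstrict with hcard | ⟨j, hj, hjlt⟩
    · rw [Set.ncard_eq_toFinset_card', Set.ncard_eq_toFinset_card'] at hcard
      obtain ⟨k, hk, hk'⟩ := Finset.exists_mem_notMem_of_card_lt_card
        (Finset.card_image_le.trans_lt hcard : ((att D x).toFinset.image δ).card < _)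
      have := Finset.sum_lt_sum_of_subset hsub hk hk' (hpos k) fun j _ _ => h0 j
      linarith
    · have : ∑ j ∈ (att D x).toFinset, vstar j < ∑ j ∈ (att D x).toFinset, vstar (δ j) :=
        Finset.sum_lt_sum (fun j hj => hle j (Set.mem_toFinset.1 hj))
          ⟨j, Set.mem_toFinset.2 hj, hjlt⟩
      linarith
  rw [hval y, hval x, hsum y, hsum x]
  exact one_div_lt_one_div_of_lt (by linarith [hnonneg x]) (by linarith)
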